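/- Let X, Y, Z, W, q be rational numbers with X^4 + Y^4 - Z^4 - W^4 = 0. Set A = (W^4 + Z^4)*X^8 - (W^8 - 6*W^4*Z^4 + Z^8)*X^4 + W^4*Z^4*(W^4 + Z^4), B = (2*W^4*Y^4 + 4*W^4*Z^4 + 2*Y^4*Z^4)*X^4 + 2*W^4*Z^4*(W^4 + 2*Y^4 + Z^4), and C = (W^4 + Z^4)*Y^8 - (W^8 - 6*W^4*Z^4 + Z^8)*Y^4 + W^4*Z^4*(W^4 + Z^4), and assume A ≠ 0. Then for each choice of sign ε ∈ {1, -1}, the rational number p = -q*((W^4*Y^4 + 2*W^4*Z^4 + Y^4*Z^4)*X^4 + ε*4*Y^2*Z^2*W^2*(W^4 - Z^4)*X^2 + Z^4*W^4*(W^4 + 2*Y^4 + Z^4))/A satisfies A*p^2 + B*p*q + C*q^2 = 0. -/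

import Mathlib

/-!
In the fourth powers `x, y, z, w` of the coordinates the surface is the hyperplane `x + y = z + w`.
Write `s` for this common sum. There the coefficients of the quadratic become
`A = s * (z * w - x * y) + 8 * z * w * x`, `C = s * (z * w - x * y) + 8 * z * w * y` and
`B = 2 * s * (x * y + 3 * z * w)`, so that
`(B / 2) ^ 2 - A * C = 16 * x * y * z * w * (s ^ 2 - 4 * z * w)`. The last factor is `(w - z) ^ 2`,
and since `x, y, z, w` are squares, the whole product is a square.
-/

section Quadratic

variable {R : Type*} [CommRing R] {a h c s p q : R}

theorem mul_quadratic_eq_sq_sub (a h c p q : R) :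
    a * (a * p ^ 2 + 2 * h * p * q + c * q ^ 2) =
      (a * p + h * q) ^ 2 - (h ^ 2 - a * c) * q ^ 2 := by
  ring

theorem quadratic_eq_zero_of_mul_eq (ha : IsLeftRegular a) (hs : h ^ 2 - a * c = s ^ 2)
    (hp : a * p = -q * (h + s)) : a * p ^ 2 + 2 * h * p * q + c * q ^ 2 = 0 := by
  have hsq : (a * p + h * q) ^ 2 = s ^ 2 * q ^ 2 := by
    rw [hp]
    ring
  rw [← ha.mul_left_eq_zero_iff, mul_quadratic_eq_sq_sub, hs, hsq, sub_self]

end Quadratic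

section Coefficients

variable {R : Type*} [CommRing R] {x y z w : R}

/-- The coefficient of `p ^ 2` in Richmond's quadratic, as a function of the fourth powers
`x, z, w` of the coordinates `X, Z, W`. Replacing `x` by `y = Y ^ 4` gives the coefficient
of `q ^ 2`. -/
def richmondOuterCoeff (x z w : R) : R :=
  (w + z) * x ^ 2 - (w ^ 2 - 6 * w * z + z ^ 2) * x + w * z * (w + z)

/-- Half the coefficient of `p * q` in Richmond's quadratic, as a function of the fourth powers
of the coordinates. Halving it removes the factor `2` from the denominator of the quadratic
formula, which then makes sense in every characteristic. -/
def richmondHalfMiddleCoeff (x y z w : R) : R :=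
  (w * y + 2 * w * z + y * z) * x + z * w * (w + 2 * y + z)

theorem richmondOuterCoeff_eq_of_add_eq_add (h : x + y = z + w) :
    richmondOuterCoeff x z w = (z + w) * (z * w - x * y) + 8 * z * w * x := by
  obtain rfl : y = z + w - x := eq_sub_of_add_eq' h
  unfold richmondOuterCoeff
  ring

theorem richmondHalfMiddleCoeff_eq_of_add_eq_add (h : x + y = z + w) :
    richmondHalfMiddleCoeff x y z w = (z + w) * (x * y + 3 * z * w) := by
  obtain rfl : y = z + w - x := eq_sub_of_add_eq' h
  unfold richmondHalfMiddleCoeff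
  ring

theorem richmondHalfMiddleCoeff_sq_sub_mul (h : x + y = z + w) :
    richmondHalfMiddleCoeff x y z w ^ 2 - richmondOuterCoeff x z w * richmondOuterCoeff y z w =
      16 * x * y * z * w * (w - z) ^ 2 := by
  have h' : y + x = z + w := by rw [add_comm, h]
  rw [richmondHalfMiddleCoeff_eq_of_add_eq_add h, richmondOuterCoeff_eq_of_add_eq_add h,
    richmondOuterCoeff_eq_of_add_eq_add h']
  linear_combination -8 * z * w * (z + w) * (z * w - x * y) * h

end Coefficients

theorem quadratic_roots_general {R : Type*} [CommRing R] {X Y Z W p q ε : R}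
    (hXYZW : X ^ 4 + Y ^ 4 = Z ^ 4 + W ^ 4)
    (hA : IsLeftRegular (richmondOuterCoeff (X ^ 4) (Z ^ 4) (W ^ 4))) (hε : ε ^ 2 = 1)
    (hp : richmondOuterCoeff (X ^ 4) (Z ^ 4) (W ^ 4) * p =
      -q * (richmondHalfMiddleCoeff (X ^ 4) (Y ^ 4) (Z ^ 4) (W ^ 4) +
        ε * 4 * Y ^ 2 * Z ^ 2 * W ^ 2 * (W ^ 4 - Z ^ 4) * X ^ 2)) :
    richmondOuterCoeff (X ^ 4) (Z ^ 4) (W ^ 4) * p ^ 2 +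
      2 * richmondHalfMiddleCoeff (X ^ 4) (Y ^ 4) (Z ^ 4) (W ^ 4) * p * q +
      richmondOuterCoeff (Y ^ 4) (Z ^ 4) (W ^ 4) * q ^ 2 = 0 := by
  refine quadratic_eq_zero_of_mul_eq hA ?_ hp
  rw [richmondHalfMiddleCoeff_sq_sub_mul hXYZW]
  linear_combination -16 * X ^ 4 * Y ^ 4 * Z ^ 4 * W ^ 4 * (W ^ 4 - Z ^ 4) ^ 2 * hε

theorem quadratic_roots (X Y Z W q : ℚ)
    (hXYZW : X^4 + Y^4 - Z^4 - W^4 = 0)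
    (A B C : ℚ)
    (hA : A = (W^4 + Z^4)*X^8 - (W^8 - 6*W^4*Z^4 + Z^8)*X^4 + W^4*Z^4*(W^4 + Z^4))
    (hB : B = (2*W^4*Y^4 + 4*W^4*Z^4 + 2*Y^4*Z^4)*X^4 + 2*W^4*Z^4*(W^4 + 2*Y^4 + Z^4))
    (hC : C = (W^4 + Z^4)*Y^8 - (W^8 - 6*W^4*Z^4 + Z^8)*Y^4 + W^4*Z^4*(W^4 + Z^4))
    (hAne : A ≠ 0) :
    ∀ ε : ℚ, ε = 1 ∨ ε = -1 →
      ∀ p : ℚ, p = -q*((W^4*Y^4 + 2*W^4*Z^4 + Y^4*Z^4)*X^4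
          + ε*4*Y^2*Z^2*W^2*(W^4 - Z^4)*X^2 + Z^4*W^4*(W^4 + 2*Y^4 + Z^4))/A →
        A*p^2 + B*p*q + C*q^2 = 0 := by
  intro ε hε p hp
  have hA' : A = richmondOuterCoeff (X ^ 4) (Z ^ 4) (W ^ 4) := by
    rw [hA, richmondOuterCoeff]; ring
  have hB' : B = 2 * richmondHalfMiddleCoeff (X ^ 4) (Y ^ 4) (Z ^ 4) (W ^ 4) := by
    rw [hB, richmondHalfMiddleCoeff]; ring
  have hC' : C = richmondOuterCoeff (Y ^ 4) (Z ^ 4) (W ^ 4) := by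
    rw [hC, richmondOuterCoeff]; ring
  have hAp : A * p = -q * (richmondHalfMiddleCoeff (X ^ 4) (Y ^ 4) (Z ^ 4) (W ^ 4) +
      ε * 4 * Y ^ 2 * Z ^ 2 * W ^ 2 * (W ^ 4 - Z ^ 4) * X ^ 2) := by
    rw [hp, mul_div_cancel₀ _ hAne, richmondHalfMiddleCoeff]; ring
  rw [hA'] at hAne hAp
  rw [hA', hB', hC']
  exact quadratic_roots_general (by linear_combination hXYZW)
    (IsRegular.of_ne_zero hAne).left (sq_eq_one_iff.mpr hε) hAp
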